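/- Let a, b, x ∈ ℤ with a < x < b, f, h : ℤ → ℝ, α, β ≥ 0 not both zero, γ, Γ ∈ ℝ with γ ≤ f(t+1)-f(t) ≤ Γ for all a ≤ t < b, and P the discrete weighted kernel. Then |f(x)/(α+β)·[α(h(x)-h(a))/(x-a) + β(h(b)-h(x))/(b-x)] - ((γ+Γ)/2)·∑_{t=a}^{b-1} P(x,t) - 1/(α+β)·[α/(x-a)∑_{t=a}^{x-1} f(t+1)Δh(t) + β/(b-x)∑_{t=x}^{b-1} f(t+1)Δh(t)]| ≤ ((Γ-γ)/2)·∑_{t=a}^{b-1} |P(x,t)|. -/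

import Mathlib

open Finset

/-!
The kernel is a multiple of `h t - h a` on `[a, x)` and of `h t - h b` on `[x, b)`, so summing it
by parts against the increments of `f` leaves no boundary terms at `a` and `b`: this is a weighted
Montgomery identity, expressing the unperturbed left-hand side as `∑ P(x, t) Δf(t)`. The
perturbation replaces each `Δf(t)` by its deviation from the midpoint of `[γ, Γ]`, which is at most
half the length of that interval.
-/

section SummationByParts

variable {ι R M : Type*} [LinearOrder ι] [LocallyFiniteOrder ι] [AddMonoidWithOne ι]
  [SuccAddOrder ι] [NoMaxOrder ι] [AddCommGroup M] {a b x : ι}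

theorem sum_Ico_add_one_sub (g : ι → M) (hab : a ≤ b) :
    ∑ t ∈ Ico a b, (g (t + 1) - g t) = g b - g a := by
  induction hab using Succ.rec with
  | rfl => simp only [Ico_self, sum_empty, sub_self]
  | succ n han ih =>
    rw [Order.succ_eq_add_one, ← sum_Ico_add_eq_sum_Ico_add_one han, ih]
    abel

variable [Ring R] [Module R M]

theorem sum_Ico_smul_add_one_sub (k : ι → R) (f : ι → M) (hab : a ≤ b) :
    ∑ t ∈ Ico a b, k t • (f (t + 1) - f t) =
      k b • f b - k a • f a - ∑ t ∈ Ico a b, (k (t + 1) - k t) • f (t + 1) := by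
  rw [← sum_Ico_add_one_sub (fun t ↦ k t • f t) hab, ← sum_sub_distrib]
  refine sum_congr rfl fun t _ ↦ ?_
  rw [smul_sub, sub_smul]
  abel

/-- The kernel of the weighted Montgomery identity at the point `x` of `[a, b]`. The paper's
`P(x, t)` is the case `u = α / ((α + β) (x - a))`, `v = β / ((α + β) (b - x))`; keeping `u` and `v`
free avoids divisions by the lengths of the two subintervals. -/
def montgomeryKernel (u v : R) (h : ι → R) (a b x t : ι) : R :=
  if t < x then u * (h t - h a) else v * (h t - h b)

theorem sum_montgomeryKernel_smul_add_one_sub (u v : R) (h : ι → R) (f : ι → M)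
    (hax : a ≤ x) (hxb : x ≤ b) :
    ∑ t ∈ Ico a b, montgomeryKernel u v h a b x t • (f (t + 1) - f t) =
      (u * (h x - h a) + v * (h b - h x)) • f x
        - (u • ∑ t ∈ Ico a x, (h (t + 1) - h t) • f (t + 1)
          + v • ∑ t ∈ Ico x b, (h (t + 1) - h t) • f (t + 1)) := by
  have hleft : ∑ t ∈ Ico a x, montgomeryKernel u v h a b x t • (f (t + 1) - f t) =
      u • ((h x - h a) • f x - ∑ t ∈ Ico a x, (h (t + 1) - h t) • f (t + 1)) := by
    calc
      _ = u • ∑ t ∈ Ico a x, (h t - h a) • (f (t + 1) - f t) := by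
        rw [smul_sum]
        refine sum_congr rfl fun t ht ↦ ?_
        rw [montgomeryKernel, if_pos (mem_Ico.1 ht).2, mul_smul]
      _ = _ := by
        simp only [sum_Ico_smul_add_one_sub (fun t ↦ h t - h a) f hax, sub_self, zero_smul,
          sub_zero, sub_sub_sub_cancel_right]
  have hright : ∑ t ∈ Ico x b, montgomeryKernel u v h a b x t • (f (t + 1) - f t) =
      v • ((h b - h x) • f x - ∑ t ∈ Ico x b, (h (t + 1) - h t) • f (t + 1)) := by
    calc
      _ = v • ∑ t ∈ Ico x b, (h t - h b) • (f (t + 1) - f t) := by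
        rw [smul_sum]
        refine sum_congr rfl fun t ht ↦ ?_
        rw [montgomeryKernel, if_neg (mem_Ico.1 ht).1.not_gt, mul_smul]
      _ = _ := by
        simp only [sum_Ico_smul_add_one_sub (fun t ↦ h t - h b) f hxb, sub_self, zero_smul,
          zero_sub, ← neg_smul, neg_sub, sub_sub_sub_cancel_right]
  rw [← Ico_union_Ico_eq_Ico hax hxb, sum_union (Ico_disjoint_Ico_consecutive a x b), hleft, hright,
    add_smul, mul_smul, mul_smul, smul_sub, smul_sub]
  abel

end SummationByParts

theorem norm_sum_smul_sub_sum_smul_le {ι 𝕜 E : Type*} [SeminormedRing 𝕜]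
    [SeminormedAddCommGroup E] [Module 𝕜 E] [IsBoundedSMul 𝕜 E] {s : Finset ι} (k : ι → 𝕜)
    {g : ι → E} {m : E} {r : ℝ} (hg : ∀ t ∈ s, g t ∈ Metric.closedBall m r) :
    ‖∑ t ∈ s, k t • g t - (∑ t ∈ s, k t) • m‖ ≤ r * ∑ t ∈ s, ‖k t‖ := by
  rw [sum_smul, ← sum_sub_distrib, mul_sum]
  refine norm_sum_le_of_le s fun t ht ↦ ?_
  calc
    ‖k t • g t - k t • m‖ = ‖k t • (g t - m)‖ := by rw [smul_sub]
    _ ≤ ‖k t‖ * ‖g t - m‖ := norm_smul_le _ _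
    _ ≤ ‖k t‖ * r := by gcongr; exact mem_closedBall_iff_norm.1 (hg t ht)
    _ = r * ‖k t‖ := mul_comm _ _

theorem discrete_weighted_perturbed_ostrowski_general {ι 𝕜 E : Type*} [LinearOrder ι]
    [LocallyFiniteOrder ι] [AddMonoidWithOne ι] [SuccAddOrder ι] [NoMaxOrder ι] [SeminormedRing 𝕜]
    [SeminormedAddCommGroup E] [Module 𝕜 E] [IsBoundedSMul 𝕜 E] {a b x : ι} (u v : 𝕜) (h : ι → 𝕜)
    {f : ι → E} {m : E} {r : ℝ} (hax : a ≤ x) (hxb : x ≤ b)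
    (hf : ∀ t ∈ Ico a b, f (t + 1) - f t ∈ Metric.closedBall m r) :
    ‖(u * (h x - h a) + v * (h b - h x)) • f x
        - (∑ t ∈ Ico a b, montgomeryKernel u v h a b x t) • m
        - (u • ∑ t ∈ Ico a x, (h (t + 1) - h t) • f (t + 1)
          + v • ∑ t ∈ Ico x b, (h (t + 1) - h t) • f (t + 1))‖
      ≤ r * ∑ t ∈ Ico a b, ‖montgomeryKernel u v h a b x t‖ := by
  rw [sub_right_comm, ← sum_montgomeryKernel_smul_add_one_sub u v h f hax hxb]
  exact norm_sum_smul_sub_sum_smul_le _ hf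

theorem discrete_weighted_perturbed_ostrowski
    (a b x : ℤ) (α β γ Γ : ℝ) (f h : ℤ → ℝ) (P : ℤ → ℝ)
    (hax : a < x) (hxb : x < b)
    (hα : 0 ≤ α) (hβ : 0 ≤ β) (hαβ : 0 < α + β)
    (hbound : ∀ t : ℤ, a ≤ t → t < b → γ ≤ f (t + 1) - f t ∧ f (t + 1) - f t ≤ Γ)
    (hP : ∀ t : ℤ, P t = if t < x
        then α / (α + β) * (h t - h a) / ((x : ℝ) - (a : ℝ))
        else -β / (α + β) * (h b - h t) / ((b : ℝ) - (x : ℝ))) :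
    |f x / (α + β) * (α * (h x - h a) / ((x : ℝ) - (a : ℝ))
          + β * (h b - h x) / ((b : ℝ) - (x : ℝ)))
      - (γ + Γ) / 2 * ∑ t ∈ Finset.Ico a b, P t
      - 1 / (α + β) *
          (α / ((x : ℝ) - (a : ℝ)) *
              ∑ t ∈ Finset.Ico a x, f (t + 1) * (h (t + 1) - h t)
           + β / ((b : ℝ) - (x : ℝ)) *
              ∑ t ∈ Finset.Ico x b, f (t + 1) * (h (t + 1) - h t))|
      ≤ (Γ - γ) / 2 * ∑ t ∈ Finset.Ico a b, |P t| := by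
  have hP_eq : P = montgomeryKernel (α / (α + β) / (x - a)) (β / (α + β) / (b - x)) h a b x := by
    funext t
    rw [hP, montgomeryKernel]
    split_ifs <;> ring
  have hf : ∀ t ∈ Ico a b, f (t + 1) - f t ∈ Metric.closedBall ((γ + Γ) / 2) ((Γ - γ) / 2) :=
    fun t ht ↦ Real.Icc_eq_closedBall γ Γ ▸ hbound t (mem_Ico.1 ht).1 (mem_Ico.1 ht).2
  have main := discrete_weighted_perturbed_ostrowski_general
    (α / (α + β) / (x - a)) (β / (α + β) / (b - x)) h hax.le hxb.le hf
  simp only [← hP_eq, smul_eq_mul, Real.norm_eq_abs, mul_comm _ (f _)] at main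
  convert main using 2
  ring
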